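/- Let v : ℝ^d → ℝ^d be Lipschitz and uniformly bounded, and let θ : ℝ^d → [0,1] be Lipschitz. Fix x⁰ ∈ ℝ^d. Let y : [0,∞) → ℝ^d be the solution of ẏ = v(y), y(0) = x⁰, and let z : [0,∞) → ℝ^d be the solution of ż = θ(z) v(z), z(0) = x⁰. Then there exists a nondecreasing function γ : [0,∞) → [0,∞) with γ(0) = 0 and γ(t) ≤ t for all t ≥ 0, such that z(t) = y(γ(t)) for all t ≥ 0. In particular, the range {z(t) : t ≥ 0} is contained in the range {y(s) : s ≥ 0}. -/

import Mathlib

open MeasureTheory Set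
open scoped ENNReal NNReal

noncomputable section

/-- The Euclidean space `ℝ^d`. -/
abbrev Euc (d : ℕ) := EuclideanSpace ℝ (Fin d)

/-!
Measure the time `γ t = ∫₀ᵗ θ (z s) ds` that the cutoff lets through. Since `0 ≤ θ ≤ 1`, `γ` is
nondecreasing and `γ t ≤ t`. By the chain rule `y ∘ γ` solves the non-autonomous equation
`u' = θ (z t) • v u`, whose right-hand side is Lipschitz in `u`; so does `z`, hence `z = y ∘ γ`.

The integral equations do not assert that their integrands are integrable, and for nonintegrable
ones the Bochner integral is `0`. Integrability is recovered from the linear growth of the fields: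
where it fails the curve sits at its starting point, and where it holds Grönwall's inequality
applies, so the curve is locally bounded in either case.
-/

section Primitive

open scoped Topology

variable {E : Type*} [NormedAddCommGroup E]

lemma ordConnected_setOf_intervalIntegrable (f : ℝ → E) (a : ℝ) :
    OrdConnected {t | a ≤ t ∧ IntervalIntegrable f volume a t} := by
  refine ⟨fun s hs b hb t ht ↦ ?_⟩
  have hat : a ≤ t := hs.1.trans ht.1
  refine ⟨hat, hb.2.mono_set ?_⟩
  rw [uIcc_of_le hat, uIcc_of_le hb.1]
  exact Icc_subset_Icc_right ht.2

lemma intervalIntegrable_of_continuousOn_Ici {f : ℝ → E} {a t : ℝ} (hf : ContinuousOn f (Ici a))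
    (ht : a ≤ t) : IntervalIntegrable f volume a t :=
  (hf.mono Icc_subset_Ici_self).intervalIntegrable_of_Icc ht

variable [NormedSpace ℝ E]

lemma hasDerivWithinAt_integral_Ici [CompleteSpace E] {f : ℝ → E} {a b t : ℝ}
    (hf : ContinuousOn f (Icc a b)) (ht : t ∈ Ico a b) :
    HasDerivWithinAt (fun u ↦ ∫ s in a..u, f s) (f t) (Ici t) t := by
  have hIoo : Ioo t b ⊆ Icc a b := fun s hs ↦ ⟨ht.1.trans hs.1.le, hs.2.le⟩
  have hint : IntervalIntegrable f volume a t :=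
    (hf.mono (Icc_subset_Icc_right ht.2.le)).intervalIntegrable_of_Icc ht.1
  have hmeas : StronglyMeasurableAtFilter f (𝓝[>] t) := by
    rw [← nhdsWithin_Ioo_eq_nhdsGT ht.2]
    exact (hf.mono hIoo).stronglyMeasurableAtFilter_nhdsWithin measurableSet_Ioo t
  have hcont : ContinuousWithinAt f (Ioi t) t := by
    rw [← continuousWithinAt_Ioo_iff_Ioi ht.2]
    exact (hf t (Ico_subset_Icc_self ht)).mono hIoo
  exact intervalIntegral.integral_hasDerivWithinAt_right hint hmeas hcont

lemma continuousOn_integral_setOf_intervalIntegrable (f : ℝ → E) (a : ℝ) :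
    ContinuousOn (fun u ↦ ∫ s in a..u, f s) {t | a ≤ t ∧ IntervalIntegrable f volume a t} := by
  have hIcc : ∀ b, a ≤ b → IntervalIntegrable f volume a b →
      ContinuousOn (fun u ↦ ∫ s in a..u, f s) (Icc a b) := fun b hab hb ↦ by
    simpa only [uIcc_of_le hab] using
      intervalIntegral.continuousOn_primitive_interval' hb left_mem_uIcc
  rintro t ⟨hat, ht⟩
  by_cases hmax : ∃ b, t < b ∧ IntervalIntegrable f volume a b
  · obtain ⟨b, htb, hb⟩ := hmax
    refine (hIcc b (hat.trans htb.le) hb t ⟨hat, htb.le⟩).mono_of_mem_nhdsWithin ?_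
    filter_upwards [self_mem_nhdsWithin, mem_nhdsWithin_of_mem_nhds (Iio_mem_nhds htb)]
      with s hs hsb using ⟨hs.1, hsb.le⟩
  · push Not at hmax
    refine (hIcc t hat ht t (right_mem_Icc.2 hat)).mono fun s hs ↦ ⟨hs.1, ?_⟩
    exact not_lt.1 fun hts ↦ hmax s hts hs.2

end Primitive

/-- Integral form, on `[0, ∞)`, of the Cauchy problem `ẏ = w(y)`, `y(0) = x₀`. Integrability of
`w ∘ y` is not part of the definition; see `IsCaratheodorySolution.intervalIntegrable`. -/
def IsCaratheodorySolution {E : Type*} [NormedAddCommGroup E] [NormedSpace ℝ E]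
    (w : E → E) (x₀ : E) (y : ℝ → E) : Prop :=
  ∀ t : ℝ, 0 ≤ t → y t = x₀ + ∫ s in (0 : ℝ)..t, w (y s)

namespace IsCaratheodorySolution

variable {E : Type*} [NormedAddCommGroup E] [NormedSpace ℝ E]
  {w : E → E} {x₀ : E} {y : ℝ → E} {K ε T t : ℝ}

lemma apply_zero (hy : IsCaratheodorySolution w x₀ y) : y 0 = x₀ := by
  simpa only [intervalIntegral.integral_same, add_zero] using hy 0 le_rfl

lemma apply_eq_of_not_intervalIntegrable (hy : IsCaratheodorySolution w x₀ y) (ht : 0 ≤ t)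
    (hint : ¬ IntervalIntegrable (w ∘ y) volume 0 t) : y t = x₀ := by
  rw [hy t ht]
  exact add_eq_left.2 (intervalIntegral.integral_undef hint)

lemma continuousOn_setOf_intervalIntegrable (hy : IsCaratheodorySolution w x₀ y) :
    ContinuousOn y {t | 0 ≤ t ∧ IntervalIntegrable (w ∘ y) volume 0 t} :=
  (continuousOn_const.add (continuousOn_integral_setOf_intervalIntegrable (w ∘ y) 0)).congr
    fun t ht ↦ hy t ht.1

lemma aestronglyMeasurable (hy : IsCaratheodorySolution w x₀ y) (hw : Continuous w) :
    AEStronglyMeasurable (w ∘ y) (volume.restrict (Ici 0)) := by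
  set S : Set ℝ := {t | 0 ≤ t ∧ IntervalIntegrable (w ∘ y) volume 0 t}
  have hS : MeasurableSet S := (ordConnected_setOf_intervalIntegrable _ _).measurableSet
  have hconst : EqOn (w ∘ y) (fun _ ↦ w x₀) (Ici 0 \ S) := fun t ht ↦
    congrArg w (hy.apply_eq_of_not_intervalIntegrable ht.1 fun hint ↦ ht.2 ⟨ht.1, hint⟩)
  have hS_sub : S ⊆ Ici 0 := fun t ht ↦ ht.1
  rw [← union_sdiff_cancel hS_sub, aestronglyMeasurable_union_iff]
  exact ⟨(hw.comp_continuousOn hy.continuousOn_setOf_intervalIntegrable).aestronglyMeasurable hS,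
    (continuousOn_const.congr hconst).aestronglyMeasurable (measurableSet_Ici.diff hS)⟩

variable [CompleteSpace E]

lemma hasDerivWithinAt_of_continuousOn (hy : IsCaratheodorySolution w x₀ y) (hw : Continuous w)
    (hcont : ContinuousOn y (Icc 0 T)) (ht : t ∈ Ico 0 T) :
    HasDerivWithinAt y (w (y t)) (Ici t) t :=
  ((hasDerivWithinAt_integral_Ici (hw.comp_continuousOn hcont) ht).const_add x₀).congr
    (fun s hs ↦ hy s (ht.1.trans hs)) (hy t ht.1)

lemma norm_le_gronwallBound (hy : IsCaratheodorySolution w x₀ y) (hw : Continuous w)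
    (hK : 0 ≤ K) (hgrowth : ∀ x, ‖w x‖ ≤ K * ‖x‖ + ε) (ht : 0 ≤ t) :
    ‖y t‖ ≤ gronwallBound ‖x₀‖ K ε t := by
  by_cases hint : IntervalIntegrable (w ∘ y) volume 0 t
  · have hcont : ContinuousOn y (Icc 0 t) := hy.continuousOn_setOf_intervalIntegrable.mono <|
      (ordConnected_setOf_intervalIntegrable (w ∘ y) 0).out ⟨le_rfl, .refl⟩ ⟨ht, hint⟩
    simpa only [sub_zero] using norm_le_gronwallBound_of_norm_deriv_right_le hcont
      (fun s hs ↦ hy.hasDerivWithinAt_of_continuousOn hw hcont hs) (by rw [hy.apply_zero])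
      (fun s _ ↦ hgrowth (y s)) t (right_mem_Icc.2 ht)
  · have hε : 0 ≤ ε := by simpa using (norm_nonneg _).trans (hgrowth 0)
    calc ‖y t‖ = gronwallBound ‖x₀‖ K ε 0 := by
          rw [hy.apply_eq_of_not_intervalIntegrable ht hint, gronwallBound_x0]
      _ ≤ gronwallBound ‖x₀‖ K ε t := gronwallBound_mono (norm_nonneg _) hε hK ht

lemma intervalIntegrable (hy : IsCaratheodorySolution w x₀ y) (hw : Continuous w)
    (hK : 0 ≤ K) (hgrowth : ∀ x, ‖w x‖ ≤ K * ‖x‖ + ε) (ht : 0 ≤ t) :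
    IntervalIntegrable (w ∘ y) volume 0 t := by
  have hε : 0 ≤ ε := by simpa using (norm_nonneg _).trans (hgrowth 0)
  rw [intervalIntegrable_iff_integrableOn_Ioc_of_le ht]
  refine .of_bound measure_Ioc_lt_top ((hy.aestronglyMeasurable hw).mono_measure
    (Measure.restrict_mono (fun s hs ↦ hs.1.le) le_rfl)) (K * gronwallBound ‖x₀‖ K ε t + ε) ?_
  filter_upwards [ae_restrict_mem measurableSet_Ioc] with s hs
  calc ‖w (y s)‖ ≤ K * ‖y s‖ + ε := hgrowth (y s)
    _ ≤ K * gronwallBound ‖x₀‖ K ε s + ε := by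
        gcongr; exact hy.norm_le_gronwallBound hw hK hgrowth hs.1.le
    _ ≤ K * gronwallBound ‖x₀‖ K ε t + ε := by
        gcongr; exact gronwallBound_mono (norm_nonneg _) hε hK hs.2

lemma continuousOn (hy : IsCaratheodorySolution w x₀ y) (hw : Continuous w)
    (hK : 0 ≤ K) (hgrowth : ∀ x, ‖w x‖ ≤ K * ‖x‖ + ε) : ContinuousOn y (Ici 0) :=
  hy.continuousOn_setOf_intervalIntegrable.mono fun _ ht ↦
    ⟨ht, hy.intervalIntegrable hw hK hgrowth ht⟩

lemma hasDerivWithinAt (hy : IsCaratheodorySolution w x₀ y) (hw : Continuous w)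
    (hcont : ContinuousOn y (Ici 0)) (ht : 0 ≤ t) : HasDerivWithinAt y (w (y t)) (Ici t) t :=
  hy.hasDerivWithinAt_of_continuousOn hw (hcont.mono Icc_subset_Ici_self) ⟨ht, lt_add_one t⟩

end IsCaratheodorySolution

section Clock

/-- The clock running at rate `ρ`, started at time `0`. With `ρ = θ ∘ z` it is the time change `γ`
relating the solution of `ż = θ(z) v(z)` to that of `ẏ = v(y)`. -/
def clock (ρ : ℝ → ℝ) (t : ℝ) : ℝ := ∫ s in (0 : ℝ)..t, ρ s

variable {ρ : ℝ → ℝ} {t : ℝ}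

lemma clock_zero (ρ : ℝ → ℝ) : clock ρ 0 = 0 := intervalIntegral.integral_same

lemma hasDerivWithinAt_clock (hρ : ContinuousOn ρ (Ici 0)) (ht : 0 ≤ t) :
    HasDerivWithinAt (clock ρ) (ρ t) (Ici t) t :=
  hasDerivWithinAt_integral_Ici (hρ.mono Icc_subset_Ici_self) ⟨ht, lt_add_one t⟩

lemma continuousOn_clock (hρ : ContinuousOn ρ (Ici 0)) : ContinuousOn (clock ρ) (Ici 0) :=
  (continuousOn_integral_setOf_intervalIntegrable ρ 0).mono fun _ ht ↦
    ⟨ht, intervalIntegrable_of_continuousOn_Ici hρ ht⟩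

lemma monotoneOn_clock (hρ : ContinuousOn ρ (Ici 0)) (hρ_nonneg : ∀ t, 0 ≤ ρ t) :
    MonotoneOn (clock ρ) (Ici 0) := fun _ hs _ ht hst ↦
  intervalIntegral.integral_mono_interval le_rfl hs hst (.of_forall hρ_nonneg)
    (intervalIntegrable_of_continuousOn_Ici hρ ht)

lemma clock_nonneg (hρ_nonneg : ∀ t, 0 ≤ ρ t) (ht : 0 ≤ t) : 0 ≤ clock ρ t :=
  intervalIntegral.integral_nonneg ht fun s _ ↦ hρ_nonneg s

lemma clock_le_self (hρ : ContinuousOn ρ (Ici 0)) (hρ_le : ∀ t, ρ t ≤ 1) (ht : 0 ≤ t) :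
    clock ρ t ≤ t :=
  calc clock ρ t ≤ ∫ _ in (0 : ℝ)..t, (1 : ℝ) :=
        intervalIntegral.integral_mono_on ht (intervalIntegrable_of_continuousOn_Ici hρ ht)
          intervalIntegrable_const fun s _ ↦ hρ_le s
    _ = t := by rw [integral_one, sub_zero]

end Clock

section Reparametrization

variable {E : Type*} [NormedAddCommGroup E]

lemma norm_le_of_lipschitzWith {F : Type*} [NormedAddCommGroup F] {v : E → F} {K : ℝ≥0}
    (hv : LipschitzWith K v) (x : E) : ‖v x‖ ≤ K * ‖x‖ + ‖v 0‖ :=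
  calc ‖v x‖ ≤ ‖v x - v 0‖ + ‖v 0‖ := norm_le_norm_sub_add (v x) (v 0)
    _ ≤ K * ‖x‖ + ‖v 0‖ := by gcongr; simpa only [sub_zero] using hv.norm_sub_le x 0

variable [NormedSpace ℝ E]

lemma norm_smul_le_of_mem_Icc {c : ℝ} (hc : c ∈ Icc (0 : ℝ) 1) (x : E) : ‖c • x‖ ≤ ‖x‖ := by
  rw [norm_smul, Real.norm_of_nonneg hc.1]
  exact mul_le_of_le_one_left (norm_nonneg x) hc.2

lemma lipschitzWith_smul_of_mem_Icc {X : Type*} [PseudoMetricSpace X] {v : X → E} {K : ℝ≥0}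
    (hv : LipschitzWith K v) {c : ℝ} (hc : c ∈ Icc (0 : ℝ) 1) : LipschitzWith K fun x ↦ c • v x :=
  .of_dist_le_mul fun x y ↦ by
    rw [dist_eq_norm, ← smul_sub]
    exact (norm_smul_le_of_mem_Icc hc _).trans (dist_eq_norm (v x) (v y) ▸ hv.dist_le_mul x y)

lemma hasDerivWithinAt_comp_clock {v : E → E} {y : ℝ → E} {ρ : ℝ → ℝ} {t : ℝ}
    (hy : ∀ t, 0 ≤ t → HasDerivWithinAt y (v (y t)) (Ici t) t)
    (hρ : ContinuousOn ρ (Ici 0)) (hρ_nonneg : ∀ t, 0 ≤ ρ t) (ht : 0 ≤ t) :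
    HasDerivWithinAt (y ∘ clock ρ) (ρ t • v (y (clock ρ t))) (Ici t) t :=
  (hy _ (clock_nonneg hρ_nonneg ht)).scomp t (hasDerivWithinAt_clock hρ ht)
    fun _ hs ↦ monotoneOn_clock hρ hρ_nonneg ht (ht.trans hs) hs

lemma eqOn_comp_clock {v : E → E} {K : ℝ≥0} (hv : LipschitzWith K v) {ρ : ℝ → ℝ}
    (hρ : ContinuousOn ρ (Ici 0)) (hρ_mem : ∀ t, ρ t ∈ Icc (0 : ℝ) 1) {y z : ℝ → E}
    (hy_cont : ContinuousOn y (Ici 0))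
    (hy : ∀ t, 0 ≤ t → HasDerivWithinAt y (v (y t)) (Ici t) t)
    (hz_cont : ContinuousOn z (Ici 0))
    (hz : ∀ t, 0 ≤ t → HasDerivWithinAt z (ρ t • v (z t)) (Ici t) t) (hzero : z 0 = y 0) :
    EqOn z (y ∘ clock ρ) (Ici 0) := by
  intro T hT
  have hρ_nonneg : ∀ t, 0 ≤ ρ t := fun t ↦ (hρ_mem t).1
  have hcomp_cont : ContinuousOn (y ∘ clock ρ) (Ici 0) :=
    hy_cont.comp (continuousOn_clock hρ) fun _ ht ↦ clock_nonneg hρ_nonneg ht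
  exact ODE_solution_unique (fun t ↦ lipschitzWith_smul_of_mem_Icc hv (hρ_mem t))
    (hz_cont.mono Icc_subset_Ici_self) (fun t ht ↦ hz t ht.1)
    (hcomp_cont.mono Icc_subset_Ici_self)
    (fun t ht ↦ hasDerivWithinAt_comp_clock hy hρ hρ_nonneg ht.1)
    (by rw [hzero, Function.comp_apply, clock_zero]) (right_mem_Icc.2 hT)

theorem reparametrization_cutoff_general [CompleteSpace E] {v : E → E} {K : ℝ≥0}
    (hv : LipschitzWith K v) {θ : E → ℝ} (hθ : Continuous θ) (hθ01 : ∀ x, θ x ∈ Icc (0 : ℝ) 1)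
    {x₀ : E} {y z : ℝ → E} (hy : IsCaratheodorySolution v x₀ y)
    (hz : IsCaratheodorySolution (fun x ↦ θ x • v x) x₀ z) :
    ∃ γ : ℝ → ℝ, MonotoneOn γ (Ici (0 : ℝ)) ∧ γ 0 = 0 ∧
      (∀ t : ℝ, 0 ≤ t → 0 ≤ γ t ∧ γ t ≤ t ∧ z t = y (γ t)) ∧
      z '' Ici (0 : ℝ) ⊆ y '' Ici (0 : ℝ) := by
  have hw : Continuous fun x ↦ θ x • v x := hθ.smul hv.continuous
  have hy_cont : ContinuousOn y (Ici 0) :=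
    hy.continuousOn hv.continuous K.coe_nonneg (norm_le_of_lipschitzWith hv)
  have hz_cont : ContinuousOn z (Ici 0) := hz.continuousOn hw K.coe_nonneg fun x ↦
    (norm_smul_le_of_mem_Icc (hθ01 x) (v x)).trans (norm_le_of_lipschitzWith hv x)
  have hρ : ContinuousOn (θ ∘ z) (Ici 0) := hθ.comp_continuousOn hz_cont
  have hρ_nonneg : ∀ t, 0 ≤ (θ ∘ z) t := fun t ↦ (hθ01 (z t)).1
  have heq : EqOn z (y ∘ clock (θ ∘ z)) (Ici 0) :=
    eqOn_comp_clock hv hρ (fun t ↦ hθ01 (z t))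
      hy_cont (fun _ ht ↦ hy.hasDerivWithinAt hv.continuous hy_cont ht)
      hz_cont (fun _ ht ↦ hz.hasDerivWithinAt hw hz_cont ht)
      (hz.apply_zero.trans hy.apply_zero.symm)
  refine ⟨clock (θ ∘ z), monotoneOn_clock hρ hρ_nonneg, clock_zero _, fun t ht ↦
    ⟨clock_nonneg hρ_nonneg ht, clock_le_self hρ (fun s ↦ (hθ01 (z s)).2) ht, heq ht⟩, ?_⟩
  rintro _ ⟨t, ht, rfl⟩
  exact ⟨clock (θ ∘ z) t, clock_nonneg hρ_nonneg ht, (heq ht).symm⟩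

end Reparametrization

/-- Reparametrization lemma: the solution of `ż = θ(z) v(z)` is a time
reparametrization of the solution of `ẏ = v(y)` issued from the same point;
in particular its range is contained in the range of the uncontrolled solution.
Solutions are understood in the Carathéodory (integral) sense. -/
theorem reparametrization_cutoff
    (d : ℕ) (v : Euc d → Euc d) (hvL : ∃ K : ℝ≥0, LipschitzWith K v)
    (hvB : ∃ C : ℝ, ∀ x, ‖v x‖ ≤ C)
    (θ : Euc d → ℝ) (hθL : ∃ K : ℝ≥0, LipschitzWith K θ)
    (hθ01 : ∀ x, θ x ∈ Icc (0:ℝ) 1)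
    (x0 : Euc d) (y z : ℝ → Euc d)
    (hy : ∀ t : ℝ, 0 ≤ t → y t = x0 + ∫ s in (0:ℝ)..t, v (y s))
    (hz : ∀ t : ℝ, 0 ≤ t → z t = x0 + ∫ s in (0:ℝ)..t, θ (z s) • v (z s)) :
    ∃ γ : ℝ → ℝ, MonotoneOn γ (Ici (0:ℝ)) ∧ γ 0 = 0 ∧
      (∀ t : ℝ, 0 ≤ t → 0 ≤ γ t ∧ γ t ≤ t ∧ z t = y (γ t)) ∧
      z '' Ici (0:ℝ) ⊆ y '' Ici (0:ℝ) := by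
  obtain ⟨K, hK⟩ := hvL
  exact reparametrization_cutoff_general hK hθL.choose_spec.continuous hθ01 hy hz
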